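/- Let V be a real inner product space and let A, B, C ∈ V be three points that are not collinear. Denote by ∠BAC the unoriented angle at A between the vectors B − A and C − A, and by ∠ACB the unoriented angle at C between the vectors A − C and B − C (both angles lie in [0, π]). If ∠BAC + 2·∠ACB > π, then dist(A, C) < dist(A, B). (This is the perturbation-decrease criterion of Triangle Attack: with x = A the benign sample, x_t^adv = B the current adversarial example with perturbation δ_t = dist(A,B), angle β_t = ∠BAC at x, and angle α_t = ∠ACB at the new point x_{t+1}^adv = C, the condition β_t + 2α_t > π guarantees δ_{t+1} = dist(A,C) < δ_t.) -/

import Mathlib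

open Real EuclideanGeometry

section

variable {V P : Type*} [NormedAddCommGroup V] [InnerProductSpace ℝ V]
  [MetricSpace P] [NormedAddTorsor V P]

theorem dist_lt_dist_of_angle_lt_angle {a b c : P} (hangle : ∠ a c b < ∠ a b c) :
    dist a b < dist a c := by
  by_cases hcol : Collinear ℝ ({a, b, c} : Set P)
  · rcases collinear_iff_eq_or_eq_or_angle_eq_zero_or_angle_eq_pi.mp hcol with
      rfl | rfl | hzero | hpi
    · -- `∠ a a c` is `π / 2` by convention, so `hangle` only excludes `a = c` here.
      have hac : a ≠ c := by
        rintro rfl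
        exact hangle.false
      simpa only [dist_self] using dist_pos.mpr hac
    · exact hangle.false.elim
    · exact absurd (hzero ▸ hangle) (angle_nonneg a c b).not_gt
    · calc
        dist a b < dist a b + dist c b :=
          lt_add_of_pos_right _ (dist_nonneg.lt_of_ne' (right_dist_ne_zero_of_angle_eq_pi hpi))
        _ = dist a c := (dist_eq_add_dist_of_angle_eq_pi hpi).symm
  · exact dist_lt_of_angle_lt hcol hangle

theorem pi_lt_angle_add_two_mul_angle_iff {A B : P} (C : P) (hAB : A ≠ B) :
    π < ∠ B A C + 2 * ∠ A C B ↔ ∠ A B C < ∠ A C B := by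
  have hsum : ∠ A B C + ∠ A C B + ∠ B A C = π := by
    rw [angle_comm A C B, angle_comm B A C]
    exact angle_add_angle_add_angle_eq_pi C hAB.symm
  constructor <;> intro <;> linarith

theorem triangle_attack_decrease_general {A B C : P} (hAB : A ≠ B)
    (hangle : π < ∠ B A C + 2 * ∠ A C B) : dist A C < dist A B :=
  dist_lt_dist_of_angle_lt_angle ((pi_lt_angle_add_two_mul_angle_iff C hAB).mp hangle)

end

/-- Triangle Attack perturbation-decrease criterion: if `∠BAC + 2·∠ACB > π` in a
nondegenerate triangle, then `dist A C < dist A B`. -/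
theorem triangle_attack_decrease
    {V : Type*} [NormedAddCommGroup V] [InnerProductSpace ℝ V]
    (A B C : V) (h : ¬ Collinear ℝ ({A, B, C} : Set V))
    (hangle : EuclideanGeometry.angle B A C + 2 * EuclideanGeometry.angle A C B > π) :
    dist A C < dist A B :=
  triangle_attack_decrease_general (ne₁₂_of_not_collinear h) hangle
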